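/- Fix an integer k ≥ 416. Let G be a finite simple graph, L a 10-assignment for G, and α, β two L-colorings of G. Suppose G contains three distinct vertices v1, v2, w forming a triangle (edges v1v2, v1w, v2w) with d_G(v1) = d_G(v2) = 5 and d_G(w) = 6. Let S = {v1, v2, w}. If there exists a k-good recoloring sequence in G − S from the restriction of α to G − S to the restriction of β to G − S, then there exists a k-good recoloring sequence in G from α to β. -/

import Mathlib

def IsLColoring {V : Type} (G : SimpleGraph V) (L : V → Finset ℕ) (φ : V → ℕ) : Prop :=
  (∀ v, φ v ∈ L v) ∧ ∀ ⦃u w : V⦄, G.Adj u w → φ u ≠ φ w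

def recolorCount {V : Type} {m : ℕ} (φ : Fin (m + 1) → V → ℕ) (v : V) : ℕ :=
  (Finset.univ.filter fun i : Fin m => φ i.castSucc v ≠ φ i.succ v).card

def IsRecolSeq {V : Type} (G : SimpleGraph V) (L : V → Finset ℕ) {m : ℕ}
    (φ : Fin (m + 1) → V → ℕ) (α β : V → ℕ) : Prop :=
  φ 0 = α ∧ φ (Fin.last m) = β ∧ (∀ i, IsLColoring G L (φ i)) ∧
    ∀ i : Fin m, ∃! v : V, φ i.castSucc v ≠ φ i.succ v

/-!
A vertex `x` that is inserted into a recoloring sequence of a smaller graph has to move only when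
one of its neighbors is about to take its color. If the list of `x` has more than `s` colors in
addition to those of its neighbors, then `x` can move to a color that none of the next `s` neighbor
moves uses. Hence `x` moves at most `⌈N / s⌉` times, where `N` is the number of neighbor moves, and
several vertices can be inserted simultaneously without reacting to each other's moves.

In the triangle, `w` has four neighbors outside `S`, so with `s = 5` it moves at most
`⌈4k / 5⌉ ≤ k - 9` times (this needs `k ≥ 45`), and once more to reach its final color. Then `v1`
and `v2` are inserted together: each sees three vertices that move at most `k` times, and `w`, which
moves at most `k - 8` times, so with `s = 4` each moves at most `(3k + (k - 8)) / 4 = k - 2` times.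
At most two further moves of each of them are needed to reach `β`.
-/

open Finset Function

variable {V : Type} {G : SimpleGraph V} {L : V → Finset ℕ} {X Y : Set V} {φ ψ χ : V → ℕ}

/-- Proper `L`-coloring of the subgraph of `G` induced on `X`. The coloring is a total function
whose values outside `X` are irrelevant, so that it can be compared with colorings on other sets. -/
def IsLColoringOn (G : SimpleGraph V) (L : V → Finset ℕ) (X : Set V) (φ : V → ℕ) : Prop :=
  (∀ v ∈ X, φ v ∈ L v) ∧ ∀ ⦃u⦄, u ∈ X → ∀ ⦃v⦄, v ∈ X → G.Adj u v → φ u ≠ φ v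

theorem isLColoringOn_univ_iff : IsLColoringOn G L Set.univ φ ↔ IsLColoring G L φ := by
  simp [IsLColoringOn, IsLColoring]

theorem isLColoringOn_iff_induce :
    IsLColoringOn G L X φ ↔ IsLColoring (G.induce X) (fun u => L u) (fun u => φ u) := by
  simp [IsLColoringOn, IsLColoring]

namespace IsLColoringOn

theorem congr (h : IsLColoringOn G L X φ) (e : Set.EqOn φ ψ X) : IsLColoringOn G L X ψ :=
  ⟨fun v hv => e hv ▸ h.1 v hv, fun _ hu _ hv huv => e hu ▸ e hv ▸ h.2 hu hv huv⟩

theorem mono (h : IsLColoringOn G L Y φ) (hXY : X ⊆ Y) : IsLColoringOn G L X φ :=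
  ⟨fun v hv => h.1 v (hXY hv), fun _ hu _ hv => h.2 (hXY hu) (hXY hv)⟩

protected theorem update [DecidableEq V] {x : V} {c : ℕ} (h : IsLColoringOn G L X φ) (hc : c ∈ L x)
    (hx : ∀ v ∈ X, G.Adj x v → φ v ≠ c) : IsLColoringOn G L X (update φ x c) := by
  refine ⟨fun v hv => ?_, fun u hu v hv huv => ?_⟩
  · obtain rfl | hvx := eq_or_ne v x
    · simpa using hc
    · simpa [hvx] using h.1 v hv
  · obtain rfl | hux := eq_or_ne u x
    · simpa [huv.ne'] using (hx v hv huv).symm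
    · obtain rfl | hvx := eq_or_ne v x
      · simpa [hux] using hx u hu huv.symm
      · simpa [hux, hvx] using h.2 hu hv huv

end IsLColoringOn

section NeighborColors

/-- The sequence of colors that the moves `ms` give to neighbors of `x`: the colors that `x` has to
avoid in time if it is inserted into the recoloring. -/
def neighborColors (G : SimpleGraph V) [DecidableRel G.Adj] (x : V) (ms : List (V × ℕ)) : List ℕ :=
  (ms.filter fun m => G.Adj x m.1).map Prod.snd

variable [DecidableRel G.Adj] {x u : V}

theorem neighborColors_cons_of_adj (h : G.Adj x u) (c : ℕ)
    (ms : List (V × ℕ)) : neighborColors G x ((u, c) :: ms) = c :: neighborColors G x ms := by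
  simp [neighborColors, h]

theorem neighborColors_cons_of_not_adj (h : ¬G.Adj x u) (c : ℕ)
    (ms : List (V × ℕ)) : neighborColors G x ((u, c) :: ms) = neighborColors G x ms := by
  simp [neighborColors, h]

end NeighborColors

section Moves

variable [DecidableEq V]

/-- `IsRecoloring G L X φ ms ψ`: performing the moves `ms` one after the other, where `(u, c)` gives
the vertex `u` the color `c`, is a recoloring of `G[X]` from `φ` to `ψ`. Moves that do not change
the coloring are allowed, and `ψ` is determined on `X` only. -/
inductive IsRecoloring (G : SimpleGraph V) (L : V → Finset ℕ) (X : Set V) :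
    (V → ℕ) → List (V × ℕ) → (V → ℕ) → Prop
  | nil {φ ψ : V → ℕ} (hφ : IsLColoringOn G L X φ) (h : Set.EqOn φ ψ X) : IsRecoloring G L X φ [] ψ
  | cons {φ ψ : V → ℕ} {u : V} {c : ℕ} {ms : List (V × ℕ)} (hφ : IsLColoringOn G L X φ)
      (hu : u ∈ X) (h : IsRecoloring G L X (update φ u c) ms ψ) :
      IsRecoloring G L X φ ((u, c) :: ms) ψ

/-- The number of moves of the vertex `u`. -/
def moveCount (u : V) (ms : List (V × ℕ)) : ℕ := (ms.map Prod.fst).count u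

theorem moveCount_nil (u : V) : moveCount u [] = 0 := rfl

theorem moveCount_cons (v u : V) (c : ℕ) (ms : List (V × ℕ)) :
    moveCount v ((u, c) :: ms) = moveCount v ms + if u = v then 1 else 0 := by
  simp [moveCount, List.count_cons]

theorem moveCount_append (u : V) (ms ms' : List (V × ℕ)) :
    moveCount u (ms ++ ms') = moveCount u ms + moveCount u ms' := by
  simp [moveCount]

namespace IsRecoloring

variable {ms ms' : List (V × ℕ)}

theorem isLColoringOn_left (h : IsRecoloring G L X φ ms ψ) : IsLColoringOn G L X φ := by
  cases h <;> assumption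

theorem isLColoringOn_right (h : IsRecoloring G L X φ ms ψ) : IsLColoringOn G L X ψ := by
  induction h with
  | nil hφ e => exact hφ.congr e
  | cons _ _ _ ih => exact ih

theorem congr_left (h : IsRecoloring G L X φ ms ψ) (e : Set.EqOn φ χ X) :
    IsRecoloring G L X χ ms ψ := by
  induction h generalizing χ with
  | nil hφ e' => exact .nil (hφ.congr e) (e.symm.trans e')
  | @cons _ _ u _ _ hφ hu _ ih =>
    refine .cons (hφ.congr e) hu (ih fun v hv => ?_)
    obtain rfl | hvu := eq_or_ne v u
    · simp
    · simpa [hvu] using e hv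

theorem trans (h : IsRecoloring G L X φ ms ψ) (h' : IsRecoloring G L X ψ ms' χ) :
    IsRecoloring G L X φ (ms ++ ms') χ := by
  induction h with
  | nil _ e => exact h'.congr_left e.symm
  | cons hφ hu _ ih => exact .cons hφ hu (ih h')

theorem length_neighborColors_le [G.LocallyFinite] [DecidableRel G.Adj] [DecidablePred (· ∈ X)]
    (h : IsRecoloring G L X φ ms ψ) (x : V) :
    (neighborColors G x ms).length ≤ ∑ u ∈ G.neighborFinset x with u ∈ X, moveCount u ms := by
  induction h with
  | nil => simp [neighborColors]
  | @cons _ _ u c ms _ hu _ ih =>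
    simp only [moveCount_cons, sum_add_distrib, sum_ite_eq]
    by_cases hxu : G.Adj x u
    · simpa [neighborColors_cons_of_adj hxu, hxu, hu] using ih
    · simpa [neighborColors_cons_of_not_adj hxu, hxu] using ih

end IsRecoloring

/-- The coloring `φ` of `G[X]` can be recolored to `ψ` with at most `b u` moves of each vertex `u`:
a `k`-good recoloring sequence with a bound that depends on the vertex. -/
def RecolorableOn (G : SimpleGraph V) (L : V → Finset ℕ) (X : Set V) (b φ ψ : V → ℕ) : Prop :=
  ∃ ms, IsRecoloring G L X φ ms ψ ∧ ∀ u ∈ X, moveCount u ms ≤ b u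

namespace RecolorableOn

variable {b b' : V → ℕ}

theorem isLColoringOn_right (h : RecolorableOn G L X b φ ψ) : IsLColoringOn G L X ψ :=
  let ⟨_, hms, _⟩ := h
  hms.isLColoringOn_right

theorem mono (h : RecolorableOn G L X b φ ψ) (hb : ∀ u ∈ X, b u ≤ b' u) :
    RecolorableOn G L X b' φ ψ :=
  let ⟨ms, hms, hcount⟩ := h
  ⟨ms, hms, fun u hu => (hcount u hu).trans (hb u hu)⟩

theorem trans (h : RecolorableOn G L X b φ ψ) (h' : RecolorableOn G L X b' ψ χ) :
    RecolorableOn G L X (b + b') φ χ := by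
  obtain ⟨ms, hms, hcount⟩ := h
  obtain ⟨ms', hms', hcount'⟩ := h'
  refine ⟨ms ++ ms', hms.trans hms', fun u hu => ?_⟩
  rw [moveCount_append]
  exact add_le_add (hcount u hu) (hcount' u hu)

end RecolorableOn

namespace IsLColoringOn

theorem recolorableOn_refl (hφ : IsLColoringOn G L X φ) : RecolorableOn G L X 0 φ φ :=
  ⟨[], .nil hφ (Set.eqOn_refl φ X), fun u _ => (moveCount_nil u).le⟩

theorem recolorableOn_of_eqOn_diff_singleton (hφ : IsLColoringOn G L X φ)
    (hψ : IsLColoringOn G L X ψ) {x : V} (hx : x ∈ X) (e : Set.EqOn φ ψ (X \ {x})) :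
    RecolorableOn G L X (Pi.single x 1) φ ψ := by
  have e' : Set.EqOn (update φ x (ψ x)) ψ X := by
    intro v hv
    obtain rfl | hvx := eq_or_ne v x
    · simp
    · simpa [hvx] using e ⟨hv, hvx⟩
  refine ⟨[(x, ψ x)], .cons hφ hx (.nil (hψ.congr e'.symm) e'), fun u _ => ?_⟩
  simp [moveCount_cons, moveCount_nil, Pi.single_apply, eq_comm]

theorem recolorableOn_update {x : V} {c : ℕ} (hφ : IsLColoringOn G L X φ)
    (hφc : IsLColoringOn G L X (update φ x c)) (hx : x ∈ X) :
    RecolorableOn G L X (Pi.single x 1) φ (update φ x c) :=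
  hφ.recolorableOn_of_eqOn_diff_singleton hφc hx
    fun _ hv => (update_of_ne (ne_of_mem_of_not_mem hv (by simp)) _ _).symm

end IsLColoringOn

end Moves

section Avoiding

variable [G.LocallyFinite]

theorem exists_color_notMem [DecidablePred (· ∈ X)] (φ : V → ℕ) {x : V} {F : Finset ℕ}
    (h : #F + #{u ∈ G.neighborFinset x | u ∈ X} < #(L x)) :
    ∃ c ∈ L x, c ∉ F ∧ ∀ v ∈ X, G.Adj x v → φ v ≠ c := by
  have hcard : #(F ∪ {u ∈ G.neighborFinset x | u ∈ X}.image φ) < #(L x) :=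
    ((card_union_le _ _).trans (Nat.add_le_add_left card_image_le _)).trans_lt h
  obtain ⟨c, hcL, hc⟩ := exists_mem_notMem_of_card_lt_card hcard
  simp only [mem_union, mem_image, mem_filter, SimpleGraph.mem_neighborFinset, not_or,
    not_exists] at hc
  exact ⟨c, hcL, hc.1, fun v hv hxv hvc => hc.2 v ⟨⟨hxv, hv⟩, hvc⟩⟩

variable [DecidableEq V] [DecidablePred (· ∈ X)]

theorem IsLColoringOn.exists_recolorableOn_notMem (hφ : IsLColoringOn G L X φ) (C : Finset V)
    (hCX : ∀ x ∈ C, x ∈ X) (F : V → Finset ℕ)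
    (hF : ∀ x ∈ C, #(F x) + #{u ∈ G.neighborFinset x | u ∈ X} < #(L x)) :
    ∃ χ, RecolorableOn G L X (Set.indicator C (1 : V → ℕ)) φ χ ∧ (∀ x ∈ C, χ x ∉ F x) ∧
      ∀ x ∉ C, χ x = φ x := by
  induction C using Finset.induction_on with
  | empty => exact ⟨φ, hφ.recolorableOn_refl.mono (by simp), by simp, by simp⟩
  | insert x C hxC ih =>
    rw [forall_mem_insert] at hCX hF
    obtain ⟨χ, hχ, hχF, hχC⟩ := ih hCX.2 hF.2
    obtain ⟨c, hcL, hcF, hcN⟩ := exists_color_notMem (X := X) χ hF.1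
    have hχX := hχ.isLColoringOn_right
    have hstep := hχX.recolorableOn_update (hχX.update hcL hcN) hCX.1
    refine ⟨update χ x c, (hχ.trans hstep).mono fun v _ => ?_, fun v hv => ?_, fun v hv => ?_⟩
    · obtain rfl | hvx := eq_or_ne v x
      · simp [hxC]
      · simp [Set.indicator_apply, hvx]
    · obtain rfl | hvx := eq_or_ne v x
      · simpa using hcF
      · simpa [hvx] using hχF v (mem_of_mem_insert_of_ne hv hvx)
    · rw [mem_insert, not_or] at hv
      simpa [hv.1] using hχC v hv.2

theorem IsLColoringOn.recolorableOn_of_eqOn_diff_pair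
    (hφ : IsLColoringOn G L X φ) (hψ : IsLColoringOn G L X ψ) {x y : V} (hx : x ∈ X) (hy : y ∈ X)
    (e : Set.EqOn φ ψ (X \ {x, y})) (hL : #{u ∈ G.neighborFinset x | u ∈ X} + 1 < #(L x)) :
    RecolorableOn G L X (Pi.single x 2 + Pi.single y 1) φ ψ := by
  -- `x` first leaves for a color that also keeps `ψ y` available for `y`.
  obtain ⟨c, hcL, hcy, hcN⟩ := exists_color_notMem (X := X) φ (F := {ψ y})
    (by rwa [card_singleton, add_comm])
  have hφc : IsLColoringOn G L X (update φ x c) := hφ.update hcL hcN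
  have hψc : IsLColoringOn G L X (update ψ x c) := by
    refine hψ.update hcL fun v hv hxv => ?_
    obtain rfl | hvy := eq_or_ne v y
    · simpa [eq_comm] using hcy
    · exact e ⟨hv, by simp [hxv.ne', hvy]⟩ ▸ hcN v hv hxv
  have hx_leaves := hφ.recolorableOn_update hφc hx
  have hy_moves := hφc.recolorableOn_of_eqOn_diff_singleton hψc hy fun v hv => by
    obtain rfl | hvx := eq_or_ne v x
    · simp
    · simpa [hvx] using e ⟨hv.1, by simpa [hvx] using hv.2⟩
  have hx_returns := hψc.recolorableOn_of_eqOn_diff_singleton hψ hx fun v hv =>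
    update_of_ne (ne_of_mem_of_not_mem hv (by simp)) _ _
  refine ((hx_leaves.trans hy_moves).trans hx_returns).mono fun v _ => ?_
  simp only [Pi.add_apply, Pi.single_apply]
  split_ifs <;> simp

end Avoiding

section Extension

/-- A vertex of color `a` whose neighbors are about to take the colors `E` is safe for the next `j`
of these moves, and the others can be handled by `n` moves of it if each of those makes it safe for
another `s` moves. -/
def IsAffordable (s n : ℕ) (E : List ℕ) (a : ℕ) : Prop :=
  ∃ j, a ∉ E.take j ∧ E.length ≤ s * n + j

namespace IsAffordable

variable {s n a c : ℕ} {E : List ℕ}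

theorem of_length_le (h : E.length ≤ s * n) (a : ℕ) : IsAffordable s n E a :=
  ⟨0, by simp, h⟩

theorem tail (h : IsAffordable s n (c :: E) a) : IsAffordable s n E a := by
  obtain ⟨j, ha, hj⟩ := h
  rw [List.length_cons] at hj
  cases j with
  | zero => exact .of_length_le (by omega) a
  | succ j => exact ⟨j, fun h => ha (by simp [h]), by omega⟩

theorem recolor (h : IsAffordable s n (c :: E) c) (hs : s ≠ 0) (ha : a ∉ (c :: E).take s) :
    n ≠ 0 ∧ IsAffordable s (n - 1) E a := by
  obtain ⟨j, hc, hj⟩ := h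
  obtain rfl : j = 0 := by
    by_contra h0
    obtain ⟨i, rfl⟩ := Nat.exists_eq_succ_of_ne_zero h0
    simp at hc
  obtain ⟨t, rfl⟩ := Nat.exists_eq_succ_of_ne_zero hs
  rw [List.length_cons] at hj
  cases n with
  | zero => simp at hj
  | succ n =>
    refine ⟨n.succ_ne_zero, t, fun h => ha (by simp [h]), ?_⟩
    rw [Nat.add_sub_cancel]
    linarith

end IsAffordable

variable [DecidableEq V] [G.LocallyFinite] [DecidablePred (· ∈ Y)]

theorem IsLColoringOn.exists_recolorableOn_update (hXY : X ⊆ Y) (hφ : IsLColoringOn G L Y φ)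
    {u : V} {c : ℕ} (hu : u ∈ X) (huc : IsLColoringOn G L X (update φ u c))
    {F : V → Finset ℕ} (hcF : ∀ x ∈ Y \ X, G.Adj x u → c ∈ F x)
    (hF : ∀ x ∈ Y \ X, #(F x) + #{v ∈ G.neighborFinset x | v ∈ Y} < #(L x))
    {C : Finset V} (hC : ∀ x, x ∈ C ↔ x ∈ Y \ X ∧ G.Adj x u ∧ φ x = c) :
    ∃ χ, RecolorableOn G L Y (Set.indicator C 1 + Pi.single u 1) φ (update χ u c) ∧
      (∀ x ∈ C, χ x ∉ F x) ∧ ∀ x ∉ C, χ x = φ x := by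
  have hCY : ∀ x ∈ C, x ∈ Y \ X := fun x hx => ((hC x).1 hx).1
  obtain ⟨χ, hχ, hχF, hχC⟩ := hφ.exists_recolorableOn_notMem C (fun x hx => (hCY x hx).1) F
    fun x hx => hF x (hCY x hx)
  have hcL : c ∈ L u := by simpa using huc.1 u hu
  have hcN : ∀ v ∈ Y, G.Adj u v → χ v ≠ c := by
    intro v hvY huv
    by_cases hvC : v ∈ C
    · rintro rfl
      exact hχF v hvC (hcF v (hCY v hvC) huv.symm)
    rw [hχC v hvC]
    by_cases hvX : v ∈ X
    · simpa [huv.ne'] using (huc.2 hu hvX huv).symm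
    · exact fun hvc => hvC ((hC v).2 ⟨⟨hvY, hvX⟩, huv.symm, hvc⟩)
  have hχY := hχ.isLColoringOn_right
  exact ⟨χ, hχ.trans (hχY.recolorableOn_update (hχY.update hcL hcN) (hXY hu)), hχF, hχC⟩

variable {ms : List (V × ℕ)} {b b' s : V → ℕ}

theorem IsLColoringOn.exists_recolorableOn_update_isAffordable [DecidableRel G.Adj] (hXY : X ⊆ Y)
    (hs : ∀ x ∈ Y \ X, s x ≠ 0)
    (hL : ∀ x ∈ Y \ X, s x + #{u ∈ G.neighborFinset x | u ∈ Y} < #(L x))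
    (hφ : IsLColoringOn G L Y φ) {u : V} {c : ℕ} (hu : u ∈ X)
    (huc : IsLColoringOn G L X (update φ u c))
    (hb : ∀ x ∈ Y \ X, IsAffordable (s x) (b x) (neighborColors G x ((u, c) :: ms)) (φ x)) :
    ∃ χ r : V → ℕ, RecolorableOn G L Y (r + Pi.single u 1) φ (update χ u c) ∧
      Set.EqOn φ χ X ∧ (∀ x ∈ X, r x = 0) ∧ (∀ x, r x ≤ b x) ∧
      ∀ x ∈ Y \ X, IsAffordable (s x) (b x - r x) (neighborColors G x ms) (χ x) := by
  classical
  let C : Finset V := {x ∈ G.neighborFinset u | x ∈ Y \ X ∧ φ x = c}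
  have hC : ∀ x, x ∈ C ↔ x ∈ Y \ X ∧ G.Adj x u ∧ φ x = c := fun x => by
    simp only [C, mem_filter, SimpleGraph.mem_neighborFinset, G.adj_comm u x, and_left_comm]
  let F : V → Finset ℕ := fun x => ((neighborColors G x ((u, c) :: ms)).take (s x)).toFinset
  have hF_card : ∀ x, #(F x) ≤ s x := fun x =>
    (List.toFinset_card_le _).trans (List.length_take_le _ _)
  have hcF : ∀ x ∈ Y \ X, G.Adj x u → c ∈ F x := fun x hx hxu => by
    obtain ⟨t, ht⟩ := Nat.exists_eq_succ_of_ne_zero (hs x hx)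
    simp [F, neighborColors_cons_of_adj hxu, ht]
  obtain ⟨χ, hχ, hχF, hχC⟩ := hφ.exists_recolorableOn_update hXY hu huc hcF
    (fun x hx => (Nat.add_le_add_right (hF_card x) _).trans_lt (hL x hx)) hC
  have hCX : ∀ x ∈ X, x ∉ C := fun x hx hxC => ((hC x).1 hxC).1.2 hx
  have hb_C : ∀ x ∈ C, b x ≠ 0 ∧ IsAffordable (s x) (b x - 1) (neighborColors G x ms) (χ x) := by
    intro x hxC
    obtain ⟨hxY, hxu, hxc⟩ := (hC x).1 hxC
    have hbx := hb x hxY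
    have hχx := hχF x hxC
    simp only [F, List.mem_toFinset] at hχx
    rw [neighborColors_cons_of_adj hxu] at hbx hχx
    exact (hxc ▸ hbx).recolor (hs x hxY) hχx
  refine ⟨χ, _, hχ, fun x hx => (hχC x (hCX x hx)).symm, fun x hx => by simp [hCX x hx],
    fun x => ?_, fun x hx => ?_⟩ <;> by_cases hxC : x ∈ C
  · simpa [hxC] using Nat.one_le_iff_ne_zero.2 (hb_C x hxC).1
  · simp [hxC]
  · simpa [hxC] using (hb_C x hxC).2
  · have hbx := hb x hx
    by_cases hxu : G.Adj x u
    · simpa [hxC, hχC] using (neighborColors_cons_of_adj hxu c ms ▸ hbx).tail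
    · simpa [hxC, hχC] using neighborColors_cons_of_not_adj hxu c ms ▸ hbx

theorem IsRecoloring.exists_recolorableOn_of_isAffordable [DecidableRel G.Adj] (hXY : X ⊆ Y)
    (hs : ∀ x ∈ Y \ X, s x ≠ 0)
    (hL : ∀ x ∈ Y \ X, s x + #{u ∈ G.neighborFinset x | u ∈ Y} < #(L x))
    (h : IsRecoloring G L X φ ms ψ) (hφ : IsLColoringOn G L Y φ)
    (hcount : ∀ u ∈ X, moveCount u ms ≤ b u)
    (hb : ∀ x ∈ Y \ X, IsAffordable (s x) (b x) (neighborColors G x ms) (φ x)) :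
    ∃ γ, RecolorableOn G L Y b φ γ ∧ Set.EqOn γ ψ X := by
  induction ms generalizing φ b with
  | nil =>
    cases h with
    | nil _ e => exact ⟨φ, hφ.recolorableOn_refl.mono fun u _ => Nat.zero_le _, e⟩
  | cons m ms ih =>
    cases h with
    | @cons _ _ u c _ _ hu h =>
      obtain ⟨χ, r, hχ, e, hrX, hrb, hb'⟩ :=
        hφ.exists_recolorableOn_update_isAffordable hXY hs hL hu h.isLColoringOn_left hb
      have e' : Set.EqOn (update φ u c) (update χ u c) X := fun v hv => by
        simp only [update_apply, e hv]
      obtain ⟨γ, hγ, hγψ⟩ := ih (h.congr_left e') hχ.isLColoringOn_right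
        (b := b - (r + Pi.single u 1 : V → ℕ))
        (fun v hv => by
          have := hcount v hv
          simp only [Pi.sub_apply, Pi.add_apply, Pi.single_apply, hrX v hv, eq_comm (a := v)]
          rw [moveCount_cons] at this
          omega)
        (fun x hx => by
          have hxu : x ≠ u := fun hxu => hx.2 (hxu ▸ hu)
          simpa [hxu] using hb' x hx)
      refine ⟨γ, (hχ.trans hγ).mono fun v _ => (add_tsub_cancel_of_le ?_).le, hγψ⟩
      obtain rfl | hvu := eq_or_ne v u
      · have := hcount v hu
        rw [moveCount_cons, if_pos rfl] at this
        simp only [Pi.add_apply, Pi.single_eq_same, hrX v hu]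
        omega
      · simpa [hvu] using hrb v

theorem RecolorableOn.exists_extension [DecidablePred (· ∈ X)] (hXY : X ⊆ Y)
    (hs : ∀ x ∈ Y \ X, s x ≠ 0)
    (hL : ∀ x ∈ Y \ X, s x + #{u ∈ G.neighborFinset x | u ∈ Y} < #(L x))
    (h : RecolorableOn G L X b φ ψ) (hφ : IsLColoringOn G L Y φ) (hbb' : ∀ u ∈ X, b u ≤ b' u)
    (hb' : ∀ x ∈ Y \ X, ∑ u ∈ G.neighborFinset x with u ∈ X, b u ≤ s x * b' x) :
    ∃ γ, RecolorableOn G L Y b' φ γ ∧ Set.EqOn γ ψ X := by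
  classical
  obtain ⟨ms, hms, hcount⟩ := h
  refine hms.exists_recolorableOn_of_isAffordable hXY hs hL hφ
    (fun u hu => (hcount u hu).trans (hbb' u hu)) fun x hx => .of_length_le ?_ _
  calc (neighborColors G x ms).length
      ≤ ∑ u ∈ G.neighborFinset x with u ∈ X, moveCount u ms := hms.length_neighborColors_le x
    _ ≤ ∑ u ∈ G.neighborFinset x with u ∈ X, b u :=
        sum_le_sum fun u hu => hcount u (mem_filter.1 hu).2
    _ ≤ s x * b' x := hb' x hx

end Extension

section Insertion

variable [G.LocallyFinite] [DecidablePred (· ∈ X)] {x y : V}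

theorem card_filter_neighborFinset_mem_add_card_le {t : Finset V}
    (ht : ∀ u ∈ t, G.Adj x u ∧ u ∉ X) :
    #{u ∈ G.neighborFinset x | u ∈ X} + #t ≤ G.degree x := by
  rw [← G.card_neighborFinset_eq_degree,
    ← card_filter_add_card_filter_not (s := G.neighborFinset x) (· ∈ X)]
  exact Nat.add_le_add_left (card_le_card fun u hu => by simpa using ht u hu) _

variable [DecidableEq V]

theorem filter_neighborFinset_mem_insert_self :
    {u ∈ G.neighborFinset x | u ∈ insert x X} = {u ∈ G.neighborFinset x | u ∈ X} :=
  filter_congr fun u hu => by simp [((G.mem_neighborFinset x u).1 hu).ne']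

theorem card_filter_neighborFinset_mem_insert_le :
    #{u ∈ G.neighborFinset x | u ∈ insert y X} ≤ #{u ∈ G.neighborFinset x | u ∈ X} + 1 := by
  refine (card_le_card fun u hu => ?_).trans (card_insert_le y _)
  simp only [mem_filter, mem_insert, Set.mem_insert_iff] at hu ⊢
  tauto

variable {b : V → ℕ} {s n : ℕ}

theorem RecolorableOn.insert_vertex (h : RecolorableOn G L X b φ ψ)
    (hφ : IsLColoringOn G L (insert x X) φ) (hψ : IsLColoringOn G L (insert x X) ψ) (hx : x ∉ X)
    (hs : s ≠ 0) (hL : s + #{u ∈ G.neighborFinset x | u ∈ X} < #(L x))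
    (hb : ∑ u ∈ G.neighborFinset x with u ∈ X, b u ≤ s * n) :
    RecolorableOn G L (insert x X) (fun u => if u ∈ X then b u else n + 1) φ ψ := by
  have hnew : ∀ v ∈ insert x X \ X, v = x := fun v hv => hv.1.resolve_right hv.2
  obtain ⟨γ, hγ, e⟩ := h.exists_extension (Set.subset_insert x X) (s := fun _ => s)
    (b' := fun u => if u ∈ X then b u else n) (fun _ _ => hs)
    (fun v hv => by rwa [hnew v hv, filter_neighborFinset_mem_insert_self]) hφ
    (fun u hu => by simp [hu]) (fun v hv => by
      obtain rfl := hnew v hv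
      simpa [hx] using hb)
  have hfinal := hγ.isLColoringOn_right.recolorableOn_of_eqOn_diff_singleton hψ
    (Set.mem_insert x X) (e.mono (by simp))
  refine (hγ.trans hfinal).mono fun u _ => ?_
  by_cases hu : u ∈ X
  · simp [hu, ne_of_mem_of_not_mem hu hx]
  · simp only [Pi.add_apply, Pi.single_apply, hu, if_false]
    split_ifs <;> omega

theorem RecolorableOn.insert_pair (h : RecolorableOn G L X b φ ψ)
    (hφ : IsLColoringOn G L (insert x (insert y X)) φ)
    (hψ : IsLColoringOn G L (insert x (insert y X)) ψ) (hx : x ∉ X) (hy : y ∉ X) (hxy : x ≠ y)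
    (hs : s ≠ 0)
    (hL : ∀ v ∈ ({x, y} : Set V), s + (#{u ∈ G.neighborFinset v | u ∈ X} + 1) < #(L v))
    (hb : ∀ v ∈ ({x, y} : Set V), ∑ u ∈ G.neighborFinset v with u ∈ X, b u ≤ s * n) :
    RecolorableOn G L (insert x (insert y X)) (fun u => if u ∈ X then b u else n + 2) φ ψ := by
  have hnew : ∀ v ∈ insert x (insert y X) \ X, v ∈ ({x, y} : Set V) := by
    rintro v ⟨rfl | rfl | hvX, hv⟩
    exacts [.inl rfl, .inr rfl, absurd hvX hv]
  have hcard : ∀ v ∈ ({x, y} : Set V), #{u ∈ G.neighborFinset v | u ∈ insert x (insert y X)} ≤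
      #{u ∈ G.neighborFinset v | u ∈ X} + 1 := by
    rintro v (rfl | rfl)
    · rw [filter_neighborFinset_mem_insert_self]
      exact card_filter_neighborFinset_mem_insert_le
    · simp_rw [Set.insert_comm x v]
      rw [filter_neighborFinset_mem_insert_self]
      exact card_filter_neighborFinset_mem_insert_le
  have hL' : ∀ v ∈ ({x, y} : Set V),
      s + #{u ∈ G.neighborFinset v | u ∈ insert x (insert y X)} < #(L v) := fun v hv =>
    (Nat.add_le_add_left (hcard v hv) s).trans_lt (hL v hv)
  obtain ⟨γ, hγ, e⟩ := h.exists_extension (Y := insert x (insert y X)) (by grind)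
    (s := fun _ => s) (b' := fun u => if u ∈ X then b u else n) (fun _ _ => hs)
    (fun v hv => hL' v (hnew v hv)) hφ (fun u hu => by simp [hu])
    (fun v hv => by simpa [hv.2] using hb v (hnew v hv))
  have hfinal := hγ.isLColoringOn_right.recolorableOn_of_eqOn_diff_pair hψ (x := x) (y := y)
    (by simp) (by simp) (e.mono (by grind)) (by have := hL' x (by simp); omega)
  refine (hγ.trans hfinal).mono fun u _ => ?_
  by_cases hu : u ∈ X
  · simp [hu, ne_of_mem_of_not_mem hu hx, ne_of_mem_of_not_mem hu hy]
  · simp only [Pi.add_apply, Pi.single_apply, hu, if_false]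
    split_ifs with hux huy
    · exact absurd (hux.symm.trans huy) hxy
    all_goals omega

end Insertion

section Sequences

variable {m : ℕ}

theorem recolorCount_succ (Φ : Fin (m + 2) → V → ℕ) (v : V) :
    recolorCount Φ v = recolorCount (Fin.tail Φ) v + if Φ 0 v ≠ Φ 1 v then 1 else 0 := by
  unfold recolorCount
  rw [Fin.card_filter_univ_succ]
  simp only [Fin.castSucc_zero, Fin.succ_zero_eq_one, Fin.castSucc_succ, Fin.tail]
  split_ifs <;> rfl

theorem IsRecolSeq.tail {Φ : Fin (m + 2) → V → ℕ} (h : IsRecolSeq G L Φ φ ψ) :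
    IsRecolSeq G L (Fin.tail Φ) (Φ 1) ψ :=
  ⟨rfl, h.2.1, fun i => h.2.2.1 i.succ, fun i => h.2.2.2 i.succ⟩

theorem IsRecolSeq.cons {Φ : Fin (m + 1) → V → ℕ} (h : IsRecolSeq G L Φ χ ψ)
    (hφ : IsLColoring G L φ) (hφχ : ∃! v, φ v ≠ χ v) :
    IsRecolSeq G L (Fin.cons φ Φ : Fin (m + 2) → V → ℕ) φ ψ := by
  obtain ⟨rfl, rfl, hΦ, hstep⟩ := h
  exact ⟨rfl, rfl, Fin.cases hφ hΦ, Fin.cases hφχ hstep⟩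

variable [DecidableEq V]

theorem IsRecoloring.exists_isRecolSeq {ms : List (V × ℕ)}
    (h : IsRecoloring G L Set.univ φ ms ψ) :
    ∃ (M : ℕ) (Φ : Fin (M + 1) → V → ℕ),
      IsRecolSeq G L Φ φ ψ ∧ ∀ u, recolorCount Φ u ≤ moveCount u ms := by
  induction h with
  | @nil φ ψ hφ e =>
    obtain rfl : φ = ψ := (Set.eqOn_univ φ ψ).1 e
    exact ⟨0, fun _ => φ, ⟨rfl, rfl, fun _ => isLColoringOn_univ_iff.1 hφ, fun i => i.elim0⟩,
      fun u => by simp [recolorCount]⟩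
  | @cons φ ψ u c ms hφ _ _ ih =>
    obtain ⟨M, Φ, hΦ, hcount⟩ := ih
    by_cases huc : φ u = c
    · refine ⟨M, Φ, by simpa [← huc] using hΦ, fun v => (hcount v).trans ?_⟩
      simp [moveCount_cons]
    · have huniq : ∃! v, φ v ≠ update φ u c v :=
        ⟨u, by simpa using huc, fun v hv => by by_contra hvu; simp [hvu] at hv⟩
      refine ⟨M + 1, Fin.cons φ Φ, hΦ.cons (isLColoringOn_univ_iff.1 hφ) huniq, fun v => ?_⟩
      rw [recolorCount_succ, moveCount_cons, Fin.tail_cons, Fin.cons_zero, Fin.cons_one, hΦ.1]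
      refine add_le_add (hcount v) ?_
      by_cases hvu : u = v
      · rw [if_pos hvu]
        split_ifs <;> simp
      · simp [Ne.symm hvu]

theorem IsRecolSeq.exists_isRecoloring {Φ : Fin (m + 1) → X → ℕ}
    (h : IsRecolSeq (G.induce X) (fun u => L u) Φ (fun u => φ u) (fun u => ψ u)) :
    ∃ ms, IsRecoloring G L X φ ms ψ ∧ ∀ u : X, moveCount u.1 ms ≤ recolorCount Φ u := by
  have hφ : IsLColoringOn G L X φ := isLColoringOn_iff_induce.2 (h.1 ▸ h.2.2.1 0)
  induction m generalizing φ with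
  | zero =>
    have e : Set.EqOn φ ψ X := fun v hv => congrFun (h.1.symm.trans h.2.1) ⟨v, hv⟩
    exact ⟨[], .nil hφ e, fun u => Nat.zero_le _⟩
  | succ m ih =>
    obtain ⟨x, hx, hxu⟩ := h.2.2.2 0
    rw [Fin.castSucc_zero, Fin.succ_zero_eq_one] at hx
    simp only [Fin.castSucc_zero, Fin.succ_zero_eq_one, h.1] at hxu
    have hΦ1 : Φ 1 = fun u : X => update φ x (Φ 1 x) u := by
      funext u
      obtain rfl | hux := eq_or_ne u x
      · simp
      · rw [update_of_ne (Subtype.coe_injective.ne hux)]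
        by_contra hne
        exact hux (hxu u (Ne.symm hne))
    have htail := h.tail
    rw [hΦ1] at htail
    obtain ⟨ms, hms, hcount⟩ := ih htail (isLColoringOn_iff_induce.2 (hΦ1 ▸ h.2.2.1 1))
    refine ⟨(x.1, Φ 1 x) :: ms, .cons hφ x.2 hms, fun u => ?_⟩
    rw [moveCount_cons, recolorCount_succ]
    refine add_le_add (hcount u) ?_
    by_cases hxu' : x.1 = u
    · obtain rfl := Subtype.ext hxu'
      simp [hx]
    · simp [hxu']

end Sequences

theorem sum_le_add_card_sub_one_mul {ι : Type*} {t : Finset ι} {b : ι → ℕ} {x : ι} {k : ℕ}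
    (hx : x ∈ t) (hb : ∀ u ∈ t, b u ≤ k) : ∑ u ∈ t, b u ≤ b x + (#t - 1) * k := by
  classical
  rw [← add_sum_erase t b hx, ← card_erase_of_mem hx, ← smul_eq_mul]
  exact Nat.add_le_add_left (sum_le_card_nsmul _ b k fun u hu => hb u (mem_of_mem_erase hu)) _

section Triangle

variable [DecidableEq V] [G.LocallyFinite] {k : ℕ} {v1 v2 w : V}

theorem RecolorableOn.insert_triangle_apex (hk : 45 ≤ k) (hLw : 10 ≤ #(L w))
    (he1 : G.Adj v1 v2) (he2 : G.Adj v1 w) (he3 : G.Adj v2 w) (hdw : G.degree w ≤ 6)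
    (h : RecolorableOn G L {v1, v2, w}ᶜ (fun _ => k) φ ψ)
    (hφ : IsLColoringOn G L {v1, v2}ᶜ φ) (hψ : IsLColoringOn G L {v1, v2}ᶜ ψ) :
    RecolorableOn G L {v1, v2}ᶜ (fun u => if u = w then k - 8 else k) φ ψ := by
  have hinsert : insert w ({v1, v2, w} : Set V)ᶜ = {v1, v2}ᶜ := by
    grind [he2.ne, he3.ne]
  have hdeg := card_filter_neighborFinset_mem_add_card_le (G := G) (X := {v1, v2, w}ᶜ) (x := w)
    (t := {v1, v2}) (by simp [he2.symm, he3.symm])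
  rw [card_pair he1.ne] at hdeg
  rw [← hinsert] at hφ hψ ⊢
  refine (h.insert_vertex (s := 5) (n := k - 9) hφ hψ (by simp) (by norm_num) (by omega)
    ?_).mono fun u hu => ?_
  · rw [sum_const, smul_eq_mul]
    nlinarith [Nat.sub_add_cancel (show 9 ≤ k by omega)]
  · grind

theorem RecolorableOn.insert_triangle_base (hk : 8 ≤ k) (hL1 : 10 ≤ #(L v1)) (hL2 : 10 ≤ #(L v2))
    (he1 : G.Adj v1 v2) (he2 : G.Adj v1 w) (he3 : G.Adj v2 w)
    (hd1 : G.degree v1 ≤ 5) (hd2 : G.degree v2 ≤ 5)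
    (h : RecolorableOn G L {v1, v2}ᶜ (fun u => if u = w then k - 8 else k) φ ψ)
    (hφ : IsLColoringOn G L Set.univ φ) (hψ : IsLColoringOn G L Set.univ ψ) :
    RecolorableOn G L Set.univ (fun _ => k) φ ψ := by
  have hinsert : insert v1 (insert v2 ({v1, v2} : Set V)ᶜ) = Set.univ := by grind
  have hdeg1 := card_filter_neighborFinset_mem_add_card_le (G := G) (X := {v1, v2}ᶜ) (x := v1)
    (t := {v2}) (by simp [he1])
  have hdeg2 := card_filter_neighborFinset_mem_add_card_le (G := G) (X := {v1, v2}ᶜ) (x := v2)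
    (t := {v1}) (by simp [he1.symm])
  rw [card_singleton] at hdeg1 hdeg2
  have hsum : ∀ v, G.Adj v w → #{u ∈ G.neighborFinset v | u ∈ ({v1, v2} : Set V)ᶜ} ≤ 4 →
      ∑ u ∈ G.neighborFinset v with u ∈ ({v1, v2} : Set V)ᶜ, (if u = w then k - 8 else k) ≤
        4 * (k - 2) := by
    intro v hvw hcard
    refine (sum_le_add_card_sub_one_mul (x := w) (k := k) (by simp [hvw, he2.ne', he3.ne'])
      fun u _ => by split_ifs <;> omega).trans ?_
    have := Nat.mul_le_mul_right k (Nat.sub_le_sub_right hcard 1)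
    rw [if_pos rfl]
    omega
  rw [← hinsert] at hφ hψ ⊢
  refine (h.insert_pair (s := 4) (n := k - 2) hφ hψ (by simp) (by simp) he1.ne (by norm_num)
    ?_ ?_).mono fun u _ => by grind
  · rintro v (rfl | rfl) <;> omega
  · rintro v (rfl | rfl)
    exacts [hsum v he2 (by omega), hsum v he3 (by omega)]

end Triangle

theorem stmt_11_general {V : Type} (G : SimpleGraph V) [G.LocallyFinite] (k : ℕ) (hk : 45 ≤ k)
    (L : V → Finset ℕ) (α β : V → ℕ) (hα : IsLColoring G L α) (hβ : IsLColoring G L β)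
    (v1 v2 w : V) (hL1 : 10 ≤ #(L v1)) (hL2 : 10 ≤ #(L v2)) (hLw : 10 ≤ #(L w))
    (he1 : G.Adj v1 v2) (he2 : G.Adj v1 w) (he3 : G.Adj v2 w)
    (hdv1 : G.degree v1 ≤ 5) (hdv2 : G.degree v2 ≤ 5) (hdw : G.degree w ≤ 6)
    (hrec : ∃ (m : ℕ) (φ : Fin (m + 1) → ↥({v1, v2, w} : Set V)ᶜ → ℕ),
      IsRecolSeq (G.induce ({v1, v2, w} : Set V)ᶜ) (fun u => L u) φ (fun u => α u) (fun u => β u) ∧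
      ∀ u, recolorCount φ u ≤ k) :
    ∃ (M : ℕ) (ψ : Fin (M + 1) → V → ℕ),
      IsRecolSeq G L ψ α β ∧ ∀ u, recolorCount ψ u ≤ k := by
  classical
  obtain ⟨m, φ, hφ, hφk⟩ := hrec
  obtain ⟨ms, hms, hcount⟩ := hφ.exists_isRecoloring
  have hα' := isLColoringOn_univ_iff.2 hα
  have hβ' := isLColoringOn_univ_iff.2 hβ
  have houter : RecolorableOn G L {v1, v2, w}ᶜ (fun _ => k) α β :=
    ⟨ms, hms, fun u hu => (hcount ⟨u, hu⟩).trans (hφk ⟨u, hu⟩)⟩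
  have hwithout_base := houter.insert_triangle_apex hk hLw he1 he2 he3 hdw
    (hα'.mono (Set.subset_univ _)) (hβ'.mono (Set.subset_univ _))
  obtain ⟨ms', hms', hcount'⟩ := hwithout_base.insert_triangle_base (by omega) hL1 hL2
    he1 he2 he3 hdv1 hdv2 hα' hβ'
  obtain ⟨M, ψ, hψ, hψk⟩ := hms'.exists_isRecolSeq
  exact ⟨M, ψ, hψ, fun u => (hψk u).trans (hcount' u (Set.mem_univ u))⟩

/-- two adjacent 5-vertices with a common 6-neighbor: if `G` contains this configuration and `G − S` has a
`k`-good recoloring sequence between the restrictions of `α` and `β` (`k ≥ 416`),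
then `G` has a `k`-good recoloring sequence from `α` to `β`. -/
theorem stmt_11 {V : Type} [Fintype V] [DecidableEq V]
    (G : SimpleGraph V) [DecidableRel G.Adj]
    (k : ℕ) (hk : 416 ≤ k)
    (L : V → Finset ℕ) (hL : ∀ u, (L u).card = 10)
    (α β : V → ℕ) (hα : IsLColoring G L α) (hβ : IsLColoring G L β)
    (v1 v2 w : V) (hnodup : ([v1, v2, w] : List V).Nodup)
    (he1: G.Adj v1 v2)
    (he2: G.Adj v1 w)
    (he3: G.Adj v2 w)
    (hdv1 : G.degree v1 = 5)
    (hdv2 : G.degree v2 = 5)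
    (hdw : G.degree w = 6)
    (S : Set V) (hS : S = {v1, v2, w})
    (hrec : ∃ (m : ℕ) (φ : Fin (m + 1) → ↥(Sᶜ) → ℕ),
      IsRecolSeq (G.induce Sᶜ) (fun u => L u.1) φ (fun u => α u.1) (fun u => β u.1) ∧
      ∀ u : ↥(Sᶜ), recolorCount φ u ≤ k) :
    ∃ (M : ℕ) (ψ : Fin (M + 1) → V → ℕ),
      IsRecolSeq G L ψ α β ∧ ∀ u : V, recolorCount ψ u ≤ k := by

  subst hS
  exact stmt_11_general G k (by omega) L α β hα hβ v1 v2 w (hL v1).ge (hL v2).ge (hL w).ge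
    he1 he2 he3 hdv1.le hdv2.le hdw.le hrec
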